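/- arXiv:2001.08825 — 2 statements merged into one kernel-verified Lean document; each statement's English description precedes it below -/
import Mathlib

section
/- Let n ∈ ℕ with n ≥ 1 and x ∈ ℝ. Then −(2·Γ(3)/(ix+1)³) · ∑_{k=0}^{n−1} C(n,k+1)·C(−3,k)·(2/(ix+1))^k = −λ_n''(x), where λ_n'' is the second derivative of λ_n. (This is the evaluation at α = 2 of the closed-form fractional Laplacian of λ_n, recovering (−Δ)^(2/2)λ_n = −λ_n''.) -/
open MeasureTheory Finset

/-- The constant `c_α = α·2^(α−1)·Γ(1/2+α/2)/(√π·Γ(1−α/2))`. -/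
noncomputable def cFrac (α : ℝ) : ℝ :=
  α * 2 ^ (α - 1) * Real.Gamma (1 / 2 + α / 2) / (Real.sqrt Real.pi * Real.Gamma (1 - α / 2))

/-- The complex Higgins function `λ_n(x) = ((ix−1)/(ix+1))^n`. -/
noncomputable def higgins (n : ℤ) (x : ℝ) : ℂ :=
  ((Complex.I * (x : ℂ) - 1) / (Complex.I * (x : ℂ) + 1)) ^ n

/-- The derivative `λ_n'`. -/
noncomputable def higgins' (n : ℤ) (x : ℝ) : ℂ := deriv (higgins n) x

/-- The complex Christov function `μ_n(x) = (ix−1)^n/(ix+1)^(n+1)`. -/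
noncomputable def christov (n : ℤ) (x : ℝ) : ℂ :=
  (Complex.I * (x : ℂ) - 1) ^ n / (Complex.I * (x : ℂ) + 1) ^ (n + 1)

/-- The derivative `μ_n'`. -/
noncomputable def christov' (n : ℤ) (x : ℝ) : ℂ := deriv (christov n) x

/-- Generalized binomial coefficient `C(z,k) = z(z−1)⋯(z−k+1)/k!` over `ℂ`. -/
noncomputable def gbinom (z : ℂ) (k : ℕ) : ℂ :=
  (∏ i ∈ Finset.range k, (z - (i : ℂ))) / (k.factorial : ℂ)

/-- Generalized binomial coefficient `C(z,k) = z(z−1)⋯(z−k+1)/k!` over `ℝ`. -/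
noncomputable def gbinomR (z : ℝ) (k : ℕ) : ℝ :=
  (∏ i ∈ Finset.range k, (z - (i : ℝ))) / (k.factorial : ℝ)

/-- Rising factorial (Pochhammer symbol) `(z)_k = z(z+1)⋯(z+k−1)` over `ℂ`. -/
noncomputable def poch (z : ℂ) (k : ℕ) : ℂ := ∏ i ∈ Finset.range k, (z + (i : ℂ))

/-- `G_α(l) = (1/(l+1))·∑_{k=0}^{l} C(l+1,k+1)·C(−1−α,k)·2^k = ₂F₁(−l, 1+α; 2; 2)`, over `ℂ`. -/
noncomputable def Gc (α : ℝ) (l : ℕ) : ℂ :=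
  (1 / ((l : ℂ) + 1)) * ∑ k ∈ Finset.range (l + 1),
    gbinom ((l : ℂ) + 1) (k + 1) * gbinom (-1 - (α : ℂ)) k * 2 ^ k

/-- `G_α(l) = (1/(l+1))·∑_{k=0}^{l} C(l+1,k+1)·C(−1−α,k)·2^k = ₂F₁(−l, 1+α; 2; 2)`, over `ℝ`. -/
noncomputable def GR (α : ℝ) (l : ℕ) : ℝ :=
  (1 / ((l : ℝ) + 1)) * ∑ k ∈ Finset.range (l + 1),
    gbinomR ((l : ℝ) + 1) (k + 1) * gbinomR (-1 - α) k * 2 ^ k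

/-- `H_α(l) = ∑_{k=0}^{l} C(l,k)·C(−1−α,k)·2^k = ₂F₁(−l, 1+α; 1; 2)`, over `ℂ`. -/
noncomputable def Hc (α : ℝ) (l : ℕ) : ℂ :=
  ∑ k ∈ Finset.range (l + 1), gbinom (l : ℂ) k * gbinom (-1 - (α : ℂ)) k * 2 ^ k

/-- `H_α(l) = ∑_{k=0}^{l} C(l,k)·C(−1−α,k)·2^k = ₂F₁(−l, 1+α; 1; 2)`, over `ℝ`. -/
noncomputable def HR (α : ℝ) (l : ℕ) : ℝ :=
  ∑ k ∈ Finset.range (l + 1), gbinomR (l : ℝ) k * gbinomR (-1 - α) k * 2 ^ k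

/-- `arccot(x) = π/2 − arctan(x) ∈ (0,π)`. -/
noncomputable def arccot (x : ℝ) : ℝ := Real.pi / 2 - Real.arctan x

lemma w_ne (x : ℝ) : Complex.I * (x : ℂ) + 1 ≠ 0 := by
  intro h
  have := congrArg Complex.re h
  simp at this

lemma hasDeriv_pow (j : ℕ) (x : ℝ) :
    HasDerivAt (fun y : ℝ => ((Complex.I * (y : ℂ) + 1)⁻¹) ^ j)
      (-Complex.I * j * ((Complex.I * (x : ℂ) + 1)⁻¹) ^ (j + 1)) x := by
  have h1 : HasDerivAt (fun y : ℝ => Complex.I * (y : ℂ) + 1) Complex.I x := by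
    simpa using ((Complex.ofRealCLM.hasDerivAt (x := x)).const_mul Complex.I).add_const 1
  have h2 := (h1.fun_inv (w_ne x)).fun_pow j
  refine h2.congr_deriv ?_
  cases j with
  | zero => simp
  | succ m =>
    have := w_ne x
    simp only [Nat.add_sub_cancel]
    rw [div_eq_mul_inv, ← inv_pow]
    ring

lemma higgins_eq (n : ℕ) : higgins (n : ℤ) = fun x : ℝ =>
    ∑ k ∈ Finset.range (n + 1),
      ((n.choose k : ℂ) * (-2) ^ k) * ((Complex.I * (x : ℂ) + 1)⁻¹) ^ k := by
  funext x
  have hw := w_ne x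
  have h : (Complex.I * (x : ℂ) - 1) / (Complex.I * (x : ℂ) + 1)
      = (-2) * (Complex.I * (x : ℂ) + 1)⁻¹ + 1 := by
    field_simp
    ring
  rw [higgins, h, zpow_natCast, add_pow]
  refine Finset.sum_congr rfl fun k _ => ?_
  rw [mul_pow, one_pow]
  ring

lemma derivSumPow (N : ℕ) (a : ℕ → ℂ) (s : ℕ) :
    deriv (fun x : ℝ => ∑ k ∈ Finset.range N, a k * ((Complex.I * (x : ℂ) + 1)⁻¹) ^ (k + s))
    = fun x : ℝ => ∑ k ∈ Finset.range N,
      (a k * (-Complex.I * ((k + s : ℕ) : ℂ))) * ((Complex.I * (x : ℂ) + 1)⁻¹) ^ (k + (s + 1)) := by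
  funext x
  have := HasDerivAt.fun_sum (u := Finset.range N)
    (fun k _ => (hasDeriv_pow (k + s) x).const_mul (a k))
  rw [this.deriv]
  refine Finset.sum_congr rfl fun k _ => ?_
  rw [← add_assoc]
  ring

lemma gbinom_nat (n k : ℕ) : gbinom (n : ℂ) k = (n.choose k : ℂ) := by
  induction k with
  | zero => simp [gbinom]
  | succ m ih =>
    have hm : ((m : ℂ) + 1) ≠ 0 := by exact_mod_cast Nat.succ_ne_zero m
    have h : gbinom (n : ℂ) (m + 1) = gbinom (n : ℂ) m * (n - m) / (m + 1) := by
      simp only [gbinom, Finset.prod_range_succ, Nat.factorial_succ]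
      push_cast
      field_simp
    rw [h, ih, div_eq_iff hm]
    have h2 := Nat.choose_succ_right_eq n m
    rcases le_or_gt m n with hmn | hmn
    · rw [← Nat.cast_sub hmn]
      exact_mod_cast h2.symm
    · rw [Nat.choose_eq_zero_of_lt hmn, Nat.choose_eq_zero_of_lt (by omega)]
      simp

lemma gbinom_neg (k : ℕ) :
    gbinom (-3 : ℂ) k = (-1) ^ k * ((k + 1) * (k + 2) / 2) := by
  induction k with
  | zero => simp [gbinom]
  | succ m ih =>
    have hm : ((m : ℂ) + 1) ≠ 0 := by exact_mod_cast Nat.succ_ne_zero m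
    have : gbinom (-3 : ℂ) (m + 1) = gbinom (-3 : ℂ) m * (-3 - m) / (m + 1) := by
      simp only [gbinom, Finset.prod_range_succ, Nat.factorial_succ]
      push_cast
      field_simp
    rw [this, ih]
    push_cast
    field_simp
    ring

theorem fracLap_higgins_alpha_two (n : ℕ) (hn : 1 ≤ n) (x : ℝ) :
    -(2 * (Real.Gamma 3 : ℂ) / (Complex.I * (x : ℂ) + 1) ^ (3 : ℕ)) *
        ∑ k ∈ Finset.range n,
          gbinom (n : ℂ) (k + 1) * gbinom (-3 : ℂ) k *
            (2 / (Complex.I * (x : ℂ) + 1)) ^ k =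
      -iteratedDeriv 2 (higgins (n : ℤ)) x := by
  have hw := w_ne x
  have hG : Real.Gamma 3 = 2 := by
    have := Real.Gamma_nat_eq_factorial 2
    rw [show ((2 : ℕ) : ℝ) + 1 = 3 by norm_num] at this
    rw [this]
    norm_num [Nat.factorial]
  have h0 := derivSumPow (n + 1) (fun k => (n.choose k : ℂ) * (-2) ^ k) 0
  simp only [add_zero, zero_add] at h0
  rw [iteratedDeriv_succ, iteratedDeriv_one, higgins_eq, h0, derivSumPow, hG]
  beta_reduce
  rw [Finset.sum_range_succ', Finset.mul_sum]
  simp only [Nat.cast_zero, mul_zero, zero_mul, add_zero]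
  rw [← Finset.sum_neg_distrib]
  refine Finset.sum_congr rfl fun k _ => ?_
  rw [gbinom_nat, gbinom_neg]
  have hI : Complex.I * Complex.I = -1 := Complex.I_mul_I
  have e2 : (-2 : ℂ) ^ (k + 1) = -2 * ((-1) ^ k * 2 ^ k) := by
    rw [pow_succ, ← mul_pow]; norm_num; ring
  rw [e2]
  generalize Complex.I * (x : ℂ) + 1 = w at *
  rw [div_eq_mul_inv, div_eq_mul_inv 2 w, mul_pow, ← inv_pow]
  generalize w⁻¹ = u
  push_cast
  linear_combination (-(2 * (n.choose (k+1) : ℂ) * (-1) ^ k * 2 ^ k * (k+1) * (k+2) * u ^ (k+3))) * hI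
end

section
/- For all n, m ∈ ℤ, the function x ↦ μ_n(x)·conj(μ_m(x)) is absolutely integrable on ℝ, and ∫_ℝ μ_n(x)·conj(μ_m(x)) dx equals π if n = m and 0 otherwise. (That is, the complex Christov functions {μ_n} form an orthogonal family in L²(ℝ), normalized by the factor 1/π.) -/
open MeasureTheory Finset

open Filter Topology in
theorem higgins_tendsto_aux (l : Filter ℝ) (hl : Tendsto (fun x : ℝ => ‖x‖) l atTop) (k : ℤ) :
    Tendsto (higgins k) l (𝓝 1) := by
  have hv : ∀ x : ℝ, (Complex.I * (x : ℂ) + 1) ≠ 0 := by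
    intro x h; simpa using congrArg Complex.re h
  have h1 : Tendsto (fun x : ℝ => Complex.I * (x : ℂ) + 1) l (Bornology.cobounded ℂ) := by
    rw [← tendsto_norm_atTop_iff_cobounded]
    refine tendsto_atTop_mono (fun x => ?_) hl
    have := Complex.abs_im_le_norm (Complex.I * (x : ℂ) + 1)
    simpa using this
  have h2 := tendsto_inv₀_cobounded.comp h1
  have h3 : Tendsto (fun x : ℝ => (Complex.I * (x : ℂ) - 1) / (Complex.I * (x : ℂ) + 1)) l (𝓝 1) := by
    have h4 := (tendsto_const_nhds (x := (1 : ℂ))).sub (h2.const_mul 2)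
    simp only [mul_zero, sub_zero] at h4
    refine h4.congr (fun x => ?_)
    have := hv x
    simp only [Function.comp]
    field_simp
    ring
  have := h3.zpow₀ k (Or.inl one_ne_zero)
  rw [one_zpow] at this
  exact this

theorem christov_mul_conj (n m : ℤ) (x : ℝ) :
    christov n x * (starRingEnd ℂ) (christov m x) =
      higgins (n - m) x * (((1 + x ^ 2)⁻¹ : ℝ) : ℂ) := by
  have hv : (Complex.I * (x : ℂ) + 1) ≠ 0 := by
    intro h; simpa using congrArg Complex.re h
  have hu : (Complex.I * (x : ℂ) - 1) ≠ 0 := by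
    intro h; simpa using congrArg Complex.re h
  have cu : (starRingEnd ℂ) (Complex.I * (x : ℂ) - 1) = -(Complex.I * (x : ℂ) + 1) := by
    simp; ring
  have cv : (starRingEnd ℂ) (Complex.I * (x : ℂ) + 1) = -(Complex.I * (x : ℂ) - 1) := by
    simp; ring
  have e : (((1 + x ^ 2)⁻¹ : ℝ) : ℂ) =
      (-((Complex.I * (x : ℂ) - 1) * (Complex.I * (x : ℂ) + 1)))⁻¹ := by
    push_cast
    congr 1
    linear_combination (x : ℂ) ^ 2 * Complex.I_sq
  have key : ∀ u v : ℂ, u ≠ 0 → v ≠ 0 →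
      u ^ n / v ^ (n + 1) * ((-v) ^ m / (-u) ^ (m + 1)) = (u / v) ^ (n - m) * (-(u * v))⁻¹ := by
    intro u v hu hv
    have hm : (-v) ^ m / (-u) ^ m = v ^ m / u ^ m := by
      rw [← div_zpow, ← div_zpow, neg_div_neg_eq]
    rw [zpow_add_one₀ hv, zpow_add_one₀ (neg_ne_zero.2 hu), zpow_sub₀ (div_ne_zero hu hv),
      div_zpow, div_zpow]
    calc _ = u ^ n / v ^ n * (1 / v) * (((-v) ^ m / (-u) ^ m) * (1 / (-u))) := by
          simp only [div_mul_div_comm, mul_one]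
      _ = _ := by
          rw [hm]
          have := zpow_ne_zero n hv
          have := zpow_ne_zero m hv
          have := zpow_ne_zero m hu
          field_simp
  rw [e, christov, christov, higgins, map_div₀, map_zpow₀, map_zpow₀, cu, cv]
  exact key _ _ hu hv

theorem higgins_hasDerivAt (k : ℤ) (x : ℝ) :
    HasDerivAt (higgins k)
      (-2 * Complex.I * k * (higgins k x * (((1 + x ^ 2)⁻¹ : ℝ) : ℂ))) x := by
  have hv : (Complex.I * (x : ℂ) + 1) ≠ 0 := by
    intro h; simpa using congrArg Complex.re h
  have hu : (Complex.I * (x : ℂ) - 1) ≠ 0 := by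
    intro h; simpa using congrArg Complex.re h
  have e : (((1 + x ^ 2)⁻¹ : ℝ) : ℂ) =
      (-((Complex.I * (x : ℂ) - 1) * (Complex.I * (x : ℂ) + 1)))⁻¹ := by
    push_cast
    congr 1
    linear_combination (x : ℂ) ^ 2 * Complex.I_sq
  have h0 : HasDerivAt (fun y : ℝ => Complex.I * (y : ℂ)) Complex.I x := by
    simpa using (Complex.ofRealCLM.hasDerivAt (x := x)).const_mul Complex.I
  have h1 := (h0.sub_const 1).fun_div (h0.add_const 1) hv
  have h2 := (hasDerivAt_zpow k _ (Or.inl (div_ne_zero hu hv))).comp x h1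
  refine h2.congr_deriv ?_
  rw [e, higgins, zpow_sub_one₀ (div_ne_zero hu hv)]
  generalize ((Complex.I * (x : ℂ) - 1) / (Complex.I * (x : ℂ) + 1)) ^ k = z
  field_simp
  ring

theorem higgins_norm (k : ℤ) (x : ℝ) : ‖higgins k x‖ = 1 := by
  have hv : (Complex.I * (x : ℂ) + 1) ≠ 0 := by
    intro h; simpa using congrArg Complex.re h
  have cu : (starRingEnd ℂ) (Complex.I * (x : ℂ) - 1) = -(Complex.I * (x : ℂ) + 1) := by
    simp; ring
  have : ‖Complex.I * (x : ℂ) - 1‖ = ‖Complex.I * (x : ℂ) + 1‖ := by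
    rw [← Complex.norm_conj, cu, norm_neg]
  rw [higgins, norm_zpow, norm_div, this, div_self (norm_ne_zero_iff.2 hv), one_zpow]

theorem christov_orthogonal (n m : ℤ) :
    Integrable (fun x : ℝ => christov n x * (starRingEnd ℂ) (christov m x)) ∧
    ∫ x : ℝ, christov n x * (starRingEnd ℂ) (christov m x) =
      if n = m then (Real.pi : ℂ) else 0 := by
  simp only [christov_mul_conj]
  have hint : Integrable (fun x : ℝ => higgins (n - m) x * (((1 + x ^ 2)⁻¹ : ℝ) : ℂ)) := by
    refine integrable_inv_one_add_sq.ofReal.bdd_mul (c := 1) ?_ ?_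
    · exact (continuous_iff_continuousAt.2
        fun x => (higgins_hasDerivAt (n - m) x).continuousAt).aestronglyMeasurable
    · exact Filter.Eventually.of_forall fun x => (higgins_norm _ x).le
  refine ⟨hint, ?_⟩
  split_ifs with h
  · subst h
    simp only [sub_self, higgins, zpow_zero, one_mul]
    rw [integral_complex_ofReal, integral_univ_inv_one_add_sq]
  · have hk : ((n - m : ℤ) : ℂ) ≠ 0 := Int.cast_ne_zero.2 (sub_ne_zero.2 h)
    have := integral_of_hasDerivAt_of_tendsto (higgins_hasDerivAt (n - m)) (hint.const_mul _)
      (higgins_tendsto_aux _ Filter.tendsto_abs_atBot_atTop _)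
      (higgins_tendsto_aux _ tendsto_norm_atTop_atTop _)
    rw [integral_const_mul, sub_self] at this
    refine (mul_eq_zero.1 this).resolve_left ?_
    exact mul_ne_zero (by simp) hk
end
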